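/- arXiv:2409.01634 — 2 statements merged into one kernel-verified Lean document; each statement's English description precedes it below -/
import Mathlib

section
/- Let G be a finite group, N a normal subgroup with G/N a p-group, and H ≤ G with G = NH. Set M = N ∩ H. Let θ be a G-invariant irreducible character of N and φ an H-invariant irreducible character of M such that p does not divide the multiplicity [θ|_M, φ]. If θ extends to an irreducible character of G, then φ extends to an irreducible character of H. -/
open scoped BigOperators Classical

noncomputable section

/-- `χ` is the character of some irreducible complex representation of `G`. -/
def IsIrrChar {G : Type} [Group G] (χ : G → ℂ) : Prop :=
  ∃ V : FDRep ℂ G, CategoryTheory.Simple V ∧ FDRep.character V = χ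

/-- The degree of a character, as a natural number. -/
def charDeg {G : Type} [Group G] (χ : G → ℂ) : ℕ := ⌊(χ 1).re⌋₊

/-- `p`-part of a natural number: the largest power of `p` dividing `n`. -/
def pPart (p n : ℕ) : ℕ := p ^ (n.factorization p)

/-- Inner product of class functions on a finite group. -/
def charInner (G : Type) [Group G] [Fintype G] (α β : G → ℂ) : ℂ :=
  (Nat.card G : ℂ)⁻¹ * ∑ g : G, α g * (starRingEnd ℂ) (β g)

/-- Restriction of a class function to a subgroup. -/
def charRes {G : Type} [Group G] (H : Subgroup G) (χ : G → ℂ) : H → ℂ := fun h => χ (h : G)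

/-- Induced class function. -/
def charInd {G : Type} [Group G] [Fintype G] (U : Subgroup G) (τ : U → ℂ) : G → ℂ :=
  fun g => (Nat.card U : ℂ)⁻¹ * ∑ x : G, if h : x * g * x⁻¹ ∈ U then τ ⟨x * g * x⁻¹, h⟩ else 0

/-!
Let `ρ` afford `φ`. The pairs `(h, P)` with `h ∈ H` and `P` an isomorphism from `ρ` to its
conjugate by `h` form a group `E`, in which `m ↦ (m, ρ m)` embeds `M` as a normal subgroup, and
`E / M` is a central extension of `H / M` by the scalars. The character `φ` extends to `H` as soon
as this extension splits, because a retraction `r` onto the scalars makes `(h, P) ↦ r(h, P)⁻¹ P`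
depend on `h` alone.

Two homomorphisms from `E / M` to the scalars are available. The transfer restricts to the scalars
as `c ↦ c ^ [H : M]`. If `σ` is any representation of `H`, then `E / M` acts on `Hom_M(ρ, σ)`, and
the inverse of the determinant of this action restricts to the scalars as `c ↦ c ^ [σ|_M, φ]`. When
the two exponents are coprime, a product of powers of the two homomorphisms is a retraction. For
`σ` one takes the restriction to `H` of a representation of `G` whose character extends `θ`.
-/

section CentralExtension

open Subgroup

variable {A Q : Type*} [CommGroup A] [Group Q]

theorem transfer_ofInjective_symm_apply {ι : A →* Q} (hι : Function.Injective ι)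
    [ι.range.FiniteIndex] (hcentral : ι.range ≤ center Q) (a : A) :
    (ι.ofInjective hι).symm.toMonoidHom.transfer (ι a) = a ^ ι.range.index := by
  have conj_eq (j : ℕ) (g : Q) (_ : g⁻¹ * ι a ^ j * g ∈ ι.range) :
      g⁻¹ * ι a ^ j * g = ι a ^ j := by
    rw [mul_assoc, ← mem_center_iff.mp (pow_mem (hcentral ⟨a, rfl⟩) j) g, inv_mul_cancel_left]
  rw [MonoidHom.transfer_eq_pow _ _ conj_eq]
  exact (ι.ofInjective hι).symm_apply_eq.mpr (Subtype.ext (map_pow ι a _).symm)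

/-- If `d` restricts to the `k`-th power map on `A`, then it and the transfer, which restricts to
the `[Q : A]`-th power map, combine by Bézout to a retraction. -/
theorem exists_leftInverse_of_coprime_index {ι : A →* Q} (hι : Function.Injective ι)
    [ι.range.FiniteIndex] (hcentral : ι.range ≤ center Q) {d : Q →* A} {k : ℕ}
    (hd : ∀ a, d (ι a) = a ^ k) (hk : k.Coprime ι.range.index) :
    ∃ r : Q →* A, ∀ a, r (ι a) = a := by
  let t : Q →* A := (ι.ofInjective hι).symm.toMonoidHom.transfer
  refine ⟨d ^ k.gcdA ι.range.index * t ^ k.gcdB ι.range.index, fun a ↦ ?_⟩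
  have bezout : (k : ℤ) * k.gcdA ι.range.index + ι.range.index * k.gcdB ι.range.index = 1 := by
    rw [← Nat.gcd_eq_gcd_ab, hk.gcd_eq_one, Nat.cast_one]
  calc d (ι a) ^ k.gcdA ι.range.index * t (ι a) ^ k.gcdB ι.range.index
      = (a ^ k) ^ k.gcdA ι.range.index * (a ^ ι.range.index) ^ k.gcdB ι.range.index := by
        rw [hd, transfer_ofInjective_symm_apply hι hcentral]
    _ = a := by
        rw [← zpow_natCast a k, ← zpow_natCast a ι.range.index, ← zpow_mul, ← zpow_mul, ← zpow_add,
          bezout, zpow_one]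

end CentralExtension

section Schur

open Representation Module

variable {k G W : Type*} [Field k] [Group G] [AddCommGroup W] [Module k W]

theorem finrank_intertwiningMap_self_eq_one_iff {ρ : Representation k G W} :
    finrank k (IntertwiningMap ρ ρ) = 1 ↔
      Nontrivial W ∧
        ∀ f : End k W, (∀ g, f * ρ g = ρ g * f) → ∃ c, algebraMap k (End k W) c = f := by
  have hone [Nontrivial W] : (1 : IntertwiningMap ρ ρ) ≠ 0 := fun h ↦
    one_ne_zero (congrArg IntertwiningMap.toLinearMap h : (1 : End k W) = 0)
  constructor
  · intro h
    have : Nontrivial (IntertwiningMap ρ ρ) := nontrivial_of_finrank_eq_succ h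
    have : Nontrivial W := not_subsingleton_iff_nontrivial.mp fun _ ↦
      not_subsingleton _ (IntertwiningMap.toLinearMap_injective ρ ρ).subsingleton
    refine ⟨this, fun f hf ↦ ?_⟩
    obtain ⟨c, hc⟩ := (finrank_eq_one_iff_of_nonzero' 1 hone).mp h ⟨f, hf⟩
    exact ⟨c, congrArg IntertwiningMap.toLinearMap hc⟩
  · rintro ⟨_, hscalar⟩
    refine (finrank_eq_one_iff_of_nonzero' 1 hone).mpr fun f ↦ ?_
    obtain ⟨c, hc⟩ := hscalar f.toLinearMap f.isIntertwining'
    exact ⟨c, IntertwiningMap.ext hc⟩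

theorem finrank_intertwiningMap_self_eq_one_of_comp {G' : Type*} [Group G']
    {τ : Representation k G W} {f : G' →* G}
    (h : finrank k (IntertwiningMap (τ.comp f) (τ.comp f)) = 1) :
    finrank k (IntertwiningMap τ τ) = 1 := by
  obtain ⟨hW, hscalar⟩ := finrank_intertwiningMap_self_eq_one_iff.mp h
  exact finrank_intertwiningMap_self_eq_one_iff.mpr
    ⟨hW, fun a ha ↦ hscalar a fun g ↦ ha (f g)⟩

end Schur

section IntertwinerGroup

open Representation Module

variable {k H W V : Type*} [Field k] [Group H] [AddCommGroup W] [Module k W] [AddCommGroup V]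
  [Module k V] {M : Subgroup H} [M.Normal]

/-- The representation `ρ` of the normal subgroup `M` is isomorphic to each of its conjugates
under `H`. -/
def IsConjInvariant (ρ : Representation k M W) : Prop :=
  ∀ h : H, Nonempty (ρ.Equiv (ρ.comp (MulAut.conjNormal h).toMonoidHom))

/-- The pairs `(h, P)` where `P` is an isomorphism from `ρ` to its conjugate by `h`. When `ρ` is
`H`-invariant and has only scalar endomorphisms, this is a central extension of `H` by `kˣ` over
which `ρ` extends tautologically. -/
def intertwinerGroup (ρ : Representation k M W) : Subgroup (H × (End k W)ˣ) where
  carrier := {x | ∀ m, (x.2 : End k W) * ρ m = ρ (MulAut.conjNormal x.1 m) * x.2}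
  one_mem' m := by simp
  mul_mem' {x y} hx hy m := by
    simp only [Prod.snd_mul, Units.val_mul, Prod.fst_mul, map_mul, MulAut.mul_apply]
    rw [mul_assoc, hy, ← mul_assoc, hx, mul_assoc]
  inv_mem' {x} hx m := by
    have hm := hx (MulAut.conjNormal x.1⁻¹ m)
    rw [map_inv, MulAut.apply_inv_self] at hm
    rw [Prod.snd_inv, Prod.fst_inv, map_inv, Units.inv_mul_eq_iff_eq_mul, ← mul_assoc, hm,
      mul_assoc, Units.mul_inv, mul_one]

namespace intertwinerGroup

/-- The projection of the intertwiner group onto `H`. -/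
def proj (ρ : Representation k M W) : intertwinerGroup ρ →* H :=
  (MonoidHom.fst _ _).comp (intertwinerGroup ρ).subtype

/-- The tautological representation `(h, P) ↦ P`. -/
def taut (ρ : Representation k M W) : Representation k (intertwinerGroup ρ) W :=
  (Units.coeHom _).comp <| (MonoidHom.snd _ _).comp (intertwinerGroup ρ).subtype

/-- The embedding `m ↦ (m, ρ m)` of `M`, along which the tautological representation restricts to
`ρ`. -/
def graph (ρ : Representation k M W) : M →* intertwinerGroup ρ :=
  (M.subtype.prod ρ.toHomUnits).codRestrict _ fun m n ↦ by
    simp only [MonoidHom.prod_apply, MonoidHom.coe_toHomUnits, ← map_mul]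
    congr 1
    ext
    simp

/-- The scalars `c ↦ (1, c)`. -/
def scalar (ρ : Representation k M W) : kˣ →* intertwinerGroup ρ :=
  (MonoidHom.prod 1 (Units.map (algebraMap k (End k W)).toMonoidHom)).codRestrict _ fun c m ↦ by
    simpa using Algebra.commutes (c : k) (ρ m)

variable (ρ : Representation k M W)

theorem ext_proj_taut {x y : intertwinerGroup ρ} (hproj : proj ρ x = proj ρ y)
    (htaut : taut ρ x = taut ρ y) : x = y :=
  Subtype.ext (Prod.ext hproj (Units.ext htaut))

theorem taut_mul_eq_conj_mul_taut (x : intertwinerGroup ρ) (m : M) :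
    taut ρ x * ρ m = ρ (MulAut.conjNormal (proj ρ x) m) * taut ρ x :=
  x.2 m

@[simp]
theorem proj_graph (m : M) : proj ρ (graph ρ m) = m :=
  rfl

@[simp]
theorem taut_graph (m : M) : taut ρ (graph ρ m) = ρ m :=
  rfl

@[simp]
theorem proj_scalar (c : kˣ) : proj ρ (scalar ρ c) = 1 :=
  rfl

@[simp]
theorem taut_scalar (c : kˣ) : taut ρ (scalar ρ c) = algebraMap k (End k W) c :=
  rfl

theorem conj_graph (x : intertwinerGroup ρ) (m : M) :
    x * graph ρ m * x⁻¹ = graph ρ (MulAut.conjNormal (proj ρ x) m) := by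
  rw [mul_inv_eq_iff_eq_mul]
  exact ext_proj_taut ρ (by simp) (by simpa using taut_mul_eq_conj_mul_taut ρ x m)

instance : (graph ρ).range.Normal where
  conj_mem := by
    rintro _ ⟨m, rfl⟩ x
    exact ⟨_, (conj_graph ρ x m).symm⟩

theorem scalar_mul_comm (c : kˣ) (x : intertwinerGroup ρ) : scalar ρ c * x = x * scalar ρ c :=
  ext_proj_taut ρ (by simp) (by simpa using Algebra.commutes (c : k) (taut ρ x))

variable {ρ}

theorem proj_surjective (hinv : IsConjInvariant ρ) :
    Function.Surjective (proj ρ) := fun h ↦ by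
  obtain ⟨P⟩ := hinv h
  exact ⟨⟨(h, (LinearMap.GeneralLinearGroup.generalLinearEquiv k W).symm P.toLinearEquiv),
    fun m ↦ P.isIntertwining' m⟩, rfl⟩

theorem ker_proj_eq_range_scalar (hρ : finrank k (IntertwiningMap ρ ρ) = 1) :
    (proj ρ).ker = (scalar ρ).range := by
  obtain ⟨_, hscalar⟩ := finrank_intertwiningMap_self_eq_one_iff.mp hρ
  refine le_antisymm (fun x hx ↦ ?_) ?_
  · obtain ⟨c, hc⟩ := hscalar (taut ρ x) fun m ↦ by
      simpa [MonoidHom.mem_ker.mp hx] using taut_mul_eq_conj_mul_taut ρ x m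
    have hc0 : c ≠ 0 := by
      rintro rfl
      exact x.1.2.ne_zero (hc.symm.trans (map_zero _))
    exact ⟨Units.mk0 c hc0, ext_proj_taut ρ hx.symm hc⟩
  · rintro _ ⟨c, rfl⟩
    exact proj_scalar ρ c

variable (ρ) in
/-- The quotient of the intertwiner group by the copy of `M` in it; a central extension of `H ⧸ M`
by `kˣ` whose class is the obstruction to extending `ρ` to `H`. -/
abbrev obstruction : Type _ :=
  intertwinerGroup ρ ⧸ (graph ρ).range

variable (ρ) in
/-- The central embedding of `kˣ` in the obstruction extension. -/
def obstructionScalar : kˣ →* obstruction ρ :=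
  (QuotientGroup.mk' _).comp (scalar ρ)

theorem obstructionScalar_injective [Nontrivial W] :
    Function.Injective (obstructionScalar ρ) := by
  refine (injective_iff_map_eq_one _).mpr fun c hc ↦ ?_
  obtain ⟨m, hm⟩ := (QuotientGroup.eq_one_iff _).mp hc
  have hm1 : m = 1 := Subtype.ext (congrArg (proj ρ) hm)
  have hc1 : algebraMap k (End k W) c = algebraMap k (End k W) 1 := by
    simpa [hm1] using congrArg (taut ρ) hm.symm
  exact Units.ext ((algebraMap k (End k W)).injective hc1)

variable (ρ) in
theorem range_obstructionScalar_le_center :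
    (obstructionScalar ρ).range ≤ Subgroup.center (obstruction ρ) := by
  rintro _ ⟨c, rfl⟩
  refine Subgroup.mem_center_iff.mpr fun q ↦ ?_
  induction q using QuotientGroup.induction_on with
  | H x => exact congrArg QuotientGroup.mk (scalar_mul_comm ρ c x).symm

theorem index_range_obstructionScalar
    (hinv : IsConjInvariant ρ) (hρ : finrank k (IntertwiningMap ρ ρ) = 1) :
    (obstructionScalar ρ).range.index = M.index := by
  have hmap : (graph ρ).range.map (proj ρ) = M := by
    rw [← MonoidHom.range_comp]
    exact M.range_subtype
  have hcomap : (obstructionScalar ρ).range.comap (QuotientGroup.mk' _) = M.comap (proj ρ) := by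
    rw [obstructionScalar, MonoidHom.range_comp, Subgroup.comap_map_eq, QuotientGroup.ker_mk',
      ← ker_proj_eq_range_scalar hρ, sup_comm, ← Subgroup.comap_map_eq, hmap]
  rw [← Subgroup.index_comap_of_surjective _ (QuotientGroup.mk'_surjective (graph ρ).range),
    hcomap, Subgroup.index_comap_of_surjective _ (proj_surjective hinv)]

variable (ρ) in
/-- The space of `M`-equivariant maps from `ρ` to a representation `σ` of `H`, cut out as the
invariants of the image of `M` in the intertwiner group. -/
abbrev equivariantMaps (σ : Representation k H V) : Submodule k (W →ₗ[k] V) :=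
  invariants (((taut ρ).linHom (σ.comp (proj ρ))).comp (graph ρ).range.subtype)

variable (ρ) in
/-- The action of the obstruction extension on the `M`-equivariant maps from `ρ` to `σ`, where the
class of `(h, P)` sends `f` to `σ h ∘ f ∘ P⁻¹`. -/
def homRep (σ : Representation k H V) :
    Representation k (obstruction ρ) (equivariantMaps ρ σ) :=
  ((taut ρ).linHom (σ.comp (proj ρ))).quotientToInvariants (graph ρ).range

variable (ρ) in
theorem finrank_equivariantMaps (σ : Representation k H V) :
    finrank k (equivariantMaps ρ σ) = finrank k (IntertwiningMap ρ (σ.comp M.subtype)) := by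
  have hinv : equivariantMaps ρ σ = invariants (ρ.linHom (σ.comp M.subtype)) := by
    ext f
    refine ⟨fun hf m ↦ hf ⟨graph ρ m, m, rfl⟩, ?_⟩
    rintro hf ⟨_, m, rfl⟩
    exact hf m
  rw [hinv, (invariantsEquivIntertwiningMap ρ _).finrank_eq]

variable (ρ) in
theorem homRep_obstructionScalar (σ : Representation k H V) (c : kˣ) :
    homRep ρ σ (obstructionScalar ρ c) = (↑c⁻¹ : k) • 1 := by
  ext f w
  change σ (proj ρ (scalar ρ c)) (f.1 (taut ρ (scalar ρ c)⁻¹ w)) = (↑c⁻¹ : k) • f.1 w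
  rw [← map_inv, proj_scalar, taut_scalar]
  simp

theorem exists_leftInverse_obstructionScalar [M.FiniteIndex]
    (hinv : IsConjInvariant ρ) (hρ : finrank k (IntertwiningMap ρ ρ) = 1)
    (σ : Representation k H V)
    (hcop : (finrank k (IntertwiningMap ρ (σ.comp M.subtype))).Coprime M.index) :
    ∃ r : obstruction ρ →* kˣ, ∀ c, r (obstructionScalar ρ c) = c := by
  have : Nontrivial W := (finrank_intertwiningMap_self_eq_one_iff.mp hρ).1
  have hindex := index_range_obstructionScalar hinv hρ
  have : (obstructionScalar ρ).range.FiniteIndex := ⟨hindex ▸ Subgroup.FiniteIndex.index_ne_zero⟩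
  let d : obstruction ρ →* kˣ := (LinearMap.det.comp (homRep ρ σ)).toHomUnits⁻¹
  refine exists_leftInverse_of_coprime_index obstructionScalar_injective
    (range_obstructionScalar_le_center ρ) (d := d) (fun c ↦ ?_) (hindex ▸ hcop)
  rw [MonoidHom.inv_apply, inv_eq_iff_eq_inv]
  ext
  change LinearMap.det (homRep ρ σ (obstructionScalar ρ c)) = _
  rw [homRep_obstructionScalar, LinearMap.det_smul, finrank_equivariantMaps]
  simp

/-- The tautological representation twisted by the inverse of a character of the obstruction
extension. -/
def twist (r : obstruction ρ →* kˣ) : Representation k (intertwinerGroup ρ) W where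
  toFun x := (↑(r x)⁻¹ : k) • taut ρ x
  map_one' := by simp
  map_mul' x y := by simp [smul_smul, mul_comm]

theorem twist_graph (r : obstruction ρ →* kˣ) (m : M) : twist r (graph ρ m) = ρ m := by
  have hm : (graph ρ m : obstruction ρ) = 1 :=
    (QuotientGroup.eq_one_iff (N := (graph ρ).range) _).mpr (MonoidHom.mem_range.mpr ⟨m, rfl⟩)
  change (↑(r (graph ρ m))⁻¹ : k) • ρ m = ρ m
  rw [hm, map_one, inv_one, Units.val_one, one_smul]

theorem twist_scalar {r : obstruction ρ →* kˣ} (hr : ∀ c, r (obstructionScalar ρ c) = c)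
    (c : kˣ) : twist r (scalar ρ c) = 1 := by
  change (↑(r (obstructionScalar ρ c))⁻¹ : k) • algebraMap k (End k W) c = 1
  rw [hr, Algebra.algebraMap_eq_smul_one, smul_smul, Units.inv_mul, one_smul]

end intertwinerGroup

open intertwinerGroup

theorem exists_extension_of_coprime_finrank_intertwiningMap [M.FiniteIndex]
    {ρ : Representation k M W} (hinv : IsConjInvariant ρ)
    (hρ : finrank k (IntertwiningMap ρ ρ) = 1) (σ : Representation k H V)
    (hcop : (finrank k (IntertwiningMap ρ (σ.comp M.subtype))).Coprime M.index) :
    ∃ τ : Representation k H W, τ.comp M.subtype = ρ := by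
  obtain ⟨r, hr⟩ := exists_leftInverse_obstructionScalar hinv hρ σ hcop
  have hker : (proj ρ).ker ≤ (twist r).ker := by
    rw [ker_proj_eq_range_scalar hρ]
    rintro _ ⟨c, rfl⟩
    exact twist_scalar hr c
  let e := QuotientGroup.quotientKerEquivOfSurjective (proj ρ) (proj_surjective hinv)
  let τ : Representation k H W :=
    (QuotientGroup.lift (proj ρ).ker (twist r) hker).comp e.symm.toMonoidHom
  have hτ (x : intertwinerGroup ρ) : τ (proj ρ x) = twist r x :=
    congrArg (QuotientGroup.lift (proj ρ).ker (twist r) hker) (e.symm_apply_apply (x : _ ⧸ _))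
  exact ⟨τ, MonoidHom.ext fun m ↦ (hτ (graph ρ m)).trans (twist_graph r m)⟩

end IntertwinerGroup

section ConjCharacter

open scoped ComplexOrder

variable {G W n : Type*} [Group G] [Finite G] [AddCommGroup W] [Module ℂ W]
  [FiniteDimensional ℂ W] [Fintype n] [DecidableEq n]

theorem exists_posDef_conjTranspose_mul_mul_eq (A : G →* Matrix n n ℂ) :
    ∃ S : Matrix n n ℂ, S.PosDef ∧ ∀ g, (A g).conjTranspose * S * A g = S := by
  cases nonempty_fintype G
  refine ⟨∑ x, (A x).conjTranspose * A x, ?_, fun g ↦ ?_⟩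
  · rw [← Finset.add_sum_erase _ _ (Finset.mem_univ 1), map_one, Matrix.conjTranspose_one, mul_one]
    exact Matrix.PosDef.one.add_posSemidef <|
      Matrix.posSemidef_sum _ fun x _ ↦ Matrix.posSemidef_conjTranspose_mul_self (A x)
  · simp only [Finset.mul_sum, Finset.sum_mul]
    refine Fintype.sum_equiv (Equiv.mulRight g) _ _ fun x ↦ ?_
    simp [Matrix.conjTranspose_mul, Matrix.mul_assoc]

theorem trace_conjTranspose_eq_trace_inv (A : G →* Matrix n n ℂ) (g : G) :
    (A g).conjTranspose.trace = (A g⁻¹).trace := by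
  obtain ⟨S, hS, hinv⟩ := exists_posDef_conjTranspose_mul_mul_eq A
  have hdet : IsUnit S.det := (Matrix.isUnit_iff_isUnit_det S).mp hS.isUnit
  have hconj : (A g).conjTranspose * S = S * A g⁻¹ := by
    conv_rhs => rw [← hinv g]
    rw [mul_assoc _ (A g), ← map_mul, mul_inv_cancel, map_one, mul_one]
  calc (A g).conjTranspose.trace = ((A g).conjTranspose * S * S⁻¹).trace := by
        rw [Matrix.mul_nonsing_inv_cancel_right _ _ hdet]
    _ = (A g⁻¹).trace := by
        rw [hconj, Matrix.trace_mul_comm, Matrix.nonsing_inv_mul_cancel_left _ _ hdet]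

theorem conj_character (ρ : Representation ℂ G W) (g : G) :
    starRingEnd ℂ (ρ.character g) = ρ.character g⁻¹ := by
  let b := Module.finBasis ℂ W
  let A : G →* Matrix _ _ ℂ := (LinearMap.toMatrixAlgEquiv b).toRingEquiv.toMonoidHom.comp ρ
  have htrace (x : G) : ρ.character x = (A x).trace := LinearMap.trace_eq_matrix_trace ℂ b (ρ x)
  rw [htrace, htrace, ← trace_conjTranspose_eq_trace_inv, Matrix.trace_conjTranspose,
    starRingEnd_apply]

end ConjCharacter

section IrreducibleCharacters

open Representation Module

variable {G W V : Type} [Group G] [AddCommGroup W] [Module ℂ W]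
  [FiniteDimensional ℂ W] [AddCommGroup V] [Module ℂ V] [FiniteDimensional ℂ V]

theorem charInner_character [Fintype G] (σ : Representation ℂ G V) (ρ : Representation ℂ G W) :
    charInner G σ.character ρ.character = finrank ℂ (IntertwiningMap ρ σ) := by
  have := invertibleOfNonzero (NeZero.ne (Nat.card G : ℂ))
  simp only [charInner, conj_character, card_inv_mul_sum_char_mul_char_eq_finrank]

theorem charInner_comp_mulEquiv [Fintype G] {G' : Type} [Group G'] [Fintype G'] (e : G' ≃* G)
    (α β : G → ℂ) : charInner G' (α ∘ e) (β ∘ e) = charInner G α β := by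
  rw [charInner, charInner, Nat.card_congr e.toEquiv]
  exact congrArg _ (e.toEquiv.sum_comp fun g ↦ α g * starRingEnd ℂ (β g))

variable [Finite G]

theorem simple_iff_finrank_intertwiningMap_self_eq_one (X : FDRep ℂ G) :
    CategoryTheory.Simple X ↔ finrank ℂ (IntertwiningMap X.ρ X.ρ) = 1 := by
  rw [FDRep.simple_iff_end_is_rank_one, ← (linHom.invariantsEquivFDRepHom X X).finrank_eq,
    (invariantsEquivIntertwiningMap X.ρ X.ρ).finrank_eq]

theorem isIrrChar_character_iff (ρ : Representation ℂ G W) :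
    IsIrrChar ρ.character ↔ finrank ℂ (IntertwiningMap ρ ρ) = 1 := by
  cases nonempty_fintype G
  refine ⟨fun ⟨X, hX, hρ⟩ ↦ ?_, fun h ↦
    ⟨FDRep.of ρ, (simple_iff_finrank_intertwiningMap_self_eq_one _).mpr h, rfl⟩⟩
  rw [← Nat.cast_inj (R := ℂ), ← charInner_character ρ ρ, ← hρ]
  exact (charInner_character X.ρ X.ρ).trans
    (congrArg Nat.cast ((simple_iff_finrank_intertwiningMap_self_eq_one X).mp hX))

theorem IsIrrChar.simple_of {ρ : Representation ℂ G W} (hρ : IsIrrChar ρ.character) :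
    CategoryTheory.Simple (FDRep.of ρ) :=
  (simple_iff_finrank_intertwiningMap_self_eq_one _).mpr ((isIrrChar_character_iff ρ).mp hρ)

theorem nonempty_equiv_of_character_eq {ρ : Representation ℂ G W} {σ : Representation ℂ G V}
    (hρ : IsIrrChar ρ.character) (h : ρ.character = σ.character) : Nonempty (ρ.Equiv σ) := by
  have := hρ.simple_of
  have := (h ▸ hρ : IsIrrChar σ.character).simple_of
  cases nonempty_fintype G
  have := invertibleOfNonzero (NeZero.ne (Nat.card G : ℂ))
  have hinner : (Nat.card G : ℂ)⁻¹ * ∑ g, ρ.character g * σ.character g⁻¹ = 1 := by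
    rw [← h, card_inv_mul_sum_char_mul_char_eq_finrank, (isIrrChar_character_iff ρ).mp hρ,
      Nat.cast_one]
  obtain ⟨i⟩ : Nonempty (FDRep.of ρ ≅ FDRep.of σ) := by
    by_contra hne
    exact one_ne_zero (hinner.symm.trans
      ((FDRep.char_orthonormal (FDRep.of ρ) (FDRep.of σ)).trans (if_neg hne)))
  refine ⟨Representation.Equiv.mk (FDRep.isoToLinearEquiv i) fun g ↦ LinearMap.ext fun w ↦ ?_⟩
  have hi : σ g = (FDRep.isoToLinearEquiv i).conj (ρ g) := FDRep.Iso.conj_ρ i g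
  simp [hi]

theorem isConjInvariant_of_character {M : Subgroup G} [M.Normal] {ρ : Representation ℂ M W}
    (hρ : IsIrrChar ρ.character)
    (hinv : ∀ (h : G) (m : M), ρ.character (MulAut.conjNormal h m) = ρ.character m) :
    IsConjInvariant ρ := fun h ↦
  nonempty_equiv_of_character_eq hρ (funext fun m ↦ (hinv h m).symm)

theorem IsIrrChar.comp_mulEquiv {G' : Type} [Group G'] {χ : G → ℂ} (hχ : IsIrrChar χ)
    (e : G' ≃* G) : IsIrrChar (χ ∘ e) := by
  have : Finite G' := Finite.of_equiv G e.symm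
  obtain ⟨X, hX, rfl⟩ := hχ
  have hcomp : (X.ρ.comp e.toMonoidHom).comp e.symm.toMonoidHom = X.ρ :=
    MonoidHom.ext fun g ↦ congrArg X.ρ (e.apply_symm_apply g)
  refine (isIrrChar_character_iff (X.ρ.comp e.toMonoidHom)).mpr
    (finrank_intertwiningMap_self_eq_one_of_comp (f := e.symm.toMonoidHom) ?_)
  rw [hcomp]
  exact (simple_iff_finrank_intertwiningMap_self_eq_one X).mp hX

theorem IsIrrChar.exists_extension_of_coprime_index {M : Subgroup G} [Fintype M] [M.Normal]
    {φ : M → ℂ} (hφ : IsIrrChar φ)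
    (hinv : ∀ (g : G) (m : M), φ (MulAut.conjNormal g m) = φ m)
    (Y : FDRep ℂ G) {k : ℕ} (hk : charInner M (charRes M Y.character) φ = k)
    (hcop : k.Coprime M.index) :
    ∃ μ : G → ℂ, IsIrrChar μ ∧ charRes M μ = φ := by
  obtain ⟨X, hX, rfl⟩ := id hφ
  have hmult : finrank ℂ (IntertwiningMap X.ρ (Y.ρ.comp M.subtype)) = k := by
    rw [← Nat.cast_inj (R := ℂ), ← hk, ← charInner_character]
    rfl
  have hEnd := (simple_iff_finrank_intertwiningMap_self_eq_one X).mp hX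
  obtain ⟨τ, hτ⟩ := exists_extension_of_coprime_finrank_intertwiningMap
    (isConjInvariant_of_character hφ hinv) hEnd Y.ρ (hmult ▸ hcop)
  refine ⟨τ.character, (isIrrChar_character_iff τ).mpr
    (finrank_intertwiningMap_self_eq_one_of_comp (f := M.subtype) (hτ ▸ hEnd)), ?_⟩
  exact congrArg Representation.character hτ

end IrreducibleCharacters

theorem coprime_relIndex_of_isPGroup_quotient {G : Type*} [Group G] [Finite G] {p k : ℕ}
    (hp : p.Prime) {N : Subgroup G} [N.Normal] (hq : IsPGroup p (G ⧸ N)) (H : Subgroup G)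
    (hk : ¬ p ∣ k) : k.Coprime (N.relIndex H) := by
  have : Fact p.Prime := ⟨hp⟩
  obtain ⟨n, hn⟩ := IsPGroup.iff_card.mp hq
  have hdvd : N.relIndex H ∣ p ^ n := hn ▸ N.relIndex_dvd_index_of_normal H
  exact (((hp.coprime_iff_not_dvd.mpr hk).symm).pow_right n).coprime_dvd_right hdvd

theorem stmt_0_general {G : Type} [Group G] [Fintype G] (N : Subgroup G) [N.Normal]
    (H : Subgroup G) (φ : (N ⊓ H : Subgroup G) → ℂ) (hφ : IsIrrChar φ)
    (hφinv : ∀ h ∈ H, ∀ n m : (N ⊓ H : Subgroup G), (m : G) = h * (n : G) * h⁻¹ → φ m = φ n)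
    (Y : FDRep ℂ G) (k : ℕ) (hk : charInner (N ⊓ H : Subgroup G) (charRes _ Y.character) φ = k)
    (hcop : k.Coprime (N.relIndex H)) :
    ∃ μ : H → ℂ, IsIrrChar μ ∧
      ∀ m : (N ⊓ H : Subgroup G), μ ⟨(m : G), (Subgroup.mem_inf.mp m.2).2⟩ = φ m := by
  let M : Subgroup H := (N ⊓ H).subgroupOf H
  have : M.Normal := by
    rw [show M = N.subgroupOf H from Subgroup.inf_subgroupOf_right N H]
    infer_instance
  have hindex : M.index = N.relIndex H := Subgroup.inf_relIndex_right N H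
  let e : M ≃* (N ⊓ H : Subgroup G) := Subgroup.subgroupOfEquivOfLe inf_le_right
  let Z : FDRep ℂ H := FDRep.of (Y.ρ.comp H.subtype)
  have hZ : charInner M (charRes M Z.character) (φ ∘ e) = k :=
    (charInner_comp_mulEquiv e (charRes _ Y.character) φ).trans hk
  obtain ⟨μ, hμ, hμM⟩ := (hφ.comp_mulEquiv e).exists_extension_of_coprime_index
    (fun h m ↦ hφinv h h.2 (e m) (e (MulAut.conjNormal h m)) rfl)
    Z hZ (hindex ▸ hcop)
  exact ⟨μ, hμ, fun m ↦ (congrFun hμM (e.symm m)).trans (congrArg φ (e.apply_symm_apply m))⟩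

/-- Lemma 2.2 (Isaacs Cor. 11.29 application): if `G/N` is a `p`-group, `G = NH`,
`M = N ⊓ H`, `θ ∈ Irr N` is `G`-invariant, `φ ∈ Irr M` is `H`-invariant with
`p ∤ [θ|_M, φ]`, and `θ` extends to `G`, then `φ` extends to `H`. -/
theorem stmt_0 {G : Type} [Group G] [Fintype G] (p : ℕ) (hp : p.Prime)
    (N : Subgroup G) [N.Normal] (hq : IsPGroup p (G ⧸ N))
    (H : Subgroup G) (hGNH : ∀ g : G, ∃ n ∈ N, ∃ h ∈ H, g = n * h)
    (θ : N → ℂ) (hθ : IsIrrChar θ)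
    (hθinv : ∀ g : G, ∀ n m : N, (m : G) = g * (n : G) * g⁻¹ → θ m = θ n)
    (φ : (N ⊓ H : Subgroup G) → ℂ) (hφ : IsIrrChar φ)
    (hφinv : ∀ h ∈ H, ∀ n m : (N ⊓ H : Subgroup G), (m : G) = h * (n : G) * h⁻¹ → φ m = φ n)
    (hmult : ∃ k : ℕ,
      charInner (N ⊓ H : Subgroup G) (fun x => θ ⟨(x : G), (Subgroup.mem_inf.mp x.2).1⟩) φ = k ∧
      ¬ p ∣ k)
    (hext : ∃ χ : G → ℂ, IsIrrChar χ ∧ ∀ n : N, χ (n : G) = θ n) :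
    ∃ μ : H → ℂ, IsIrrChar μ ∧
      ∀ m : (N ⊓ H : Subgroup G), μ ⟨(m : G), (Subgroup.mem_inf.mp m.2).2⟩ = φ m := by
  obtain ⟨k, hk, hpk⟩ := hmult
  obtain ⟨_, ⟨Y, -, rfl⟩, hY⟩ := hext
  simp only [← hY] at hk
  exact stmt_0_general N H φ hφ hφinv Y k hk (coprime_relIndex_of_isPGroup_quotient hp hq H hpk)
end
end

section
/- Let A act by automorphisms on a finite group G, let N ⊴ G be A-invariant with gcd(|G:N|, |A|) = 1 and with A acting trivially on G/N (i.e., C_{G/N}(A) = G/N). Let χ ∈ Irr(G) and θ ∈ Irr(N) with [χ|_N, θ] ≠ 0. Then χ is A-invariant if and only if θ is A-invariant. -/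
open scoped BigOperators Classical

noncomputable section

/-!
It suffices to treat a single automorphism `α` of `G`, trivial modulo `N`, whose order is coprime
to `|G : N|`.

If `χ` is `α`-invariant, then `θ` and its image under `α` both lie under `χ`, so by Clifford they
are conjugate by some `x ∈ G`. As `α` is trivial modulo `N`, its action on the conjugates of `θ`
commutes with conjugation, so `α ^ i` acts on `θ` as `x ^ i` does. Hence `x ^ m` fixes `θ` both for
`m` the order of `α` and for `m = |G : N|`, and by coprimality `x` itself fixes `θ`.

If `θ` is `α`-invariant, then so is every constituent of `χ` on `N`. To compare `χ (α g)` with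
`χ g`, restrict `χ` to the preimage `H` of the cyclic group generated by `gN`. For a constituent
`ψ` of that restriction, `ψ ∘ α` and `ψ` agree on `N`, and as `H / N` is abelian, `ψ ∘ α` is the
product of `ψ` and a linear character of `H / N`. Wherever `ψ` does not vanish, the values of this
linear character have order dividing both `|G : N|` and the order of `α`, so they equal `1`.
-/

open Representation CategoryTheory
open scoped MonoidAlgebra

section Irreducible

variable {k G H V : Type*} [Field k] [Monoid G] [Monoid H] [AddCommGroup V] [Module k V]

theorem nontrivial_of_isIrreducible (ρ : Representation k G V) [IsIrreducible ρ] : Nontrivial V :=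
  IsSimpleModule.nontrivial k[G] ρ.asModule

theorem isIrreducible_of_forall_eq_bot_or_eq_top [Nontrivial V] (ρ : Representation k G V)
    (h : ∀ p : Submodule k V, (∀ g, ∀ v ∈ p, ρ g v ∈ p) → p = ⊥ ∨ p = ⊤) : IsIrreducible ρ where
  exists_pair_ne :=
    ⟨⊥, ⊤, fun e ↦ bot_ne_top (α := Submodule k V) (congrArg Subrepresentation.toSubmodule e)⟩
  eq_bot_or_eq_top p :=
    (h p.toSubmodule fun g _ hv ↦ p.apply_mem_toSubmodule g hv).imp
      (fun e ↦ Subrepresentation.toSubmodule_injective e)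
      (fun e ↦ Subrepresentation.toSubmodule_injective e)

theorem eq_bot_or_eq_top_of_isIrreducible (ρ : Representation k G V) [IsIrreducible ρ]
    (p : Submodule k V) (hp : ∀ g, ∀ v ∈ p, ρ g v ∈ p) : p = ⊥ ∨ p = ⊤ :=
  (eq_bot_or_eq_top (⟨p, fun g v hv ↦ hp g v hv⟩ : Subrepresentation ρ)).imp
    (congrArg Subrepresentation.toSubmodule) (congrArg Subrepresentation.toSubmodule)

theorem isIrreducible_comp_of_surjective (ρ : Representation k G V) [IsIrreducible ρ] {f : H →* G}
    (hf : Function.Surjective f) : IsIrreducible (ρ.comp f : Representation k H V) :=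
  have := nontrivial_of_isIrreducible ρ
  isIrreducible_of_forall_eq_bot_or_eq_top _ fun p hp ↦
    eq_bot_or_eq_top_of_isIrreducible ρ p (hf.forall.2 hp)

theorem isIrreducible_of_smul (ρ σ : Representation k G V) [IsIrreducible ρ] (c : G → kˣ)
    (h : ∀ g, ρ g = c g • σ g) : IsIrreducible σ :=
  have := nontrivial_of_isIrreducible ρ
  isIrreducible_of_forall_eq_bot_or_eq_top σ fun p hp ↦
    eq_bot_or_eq_top_of_isIrreducible ρ p fun g v hv ↦ by
      rw [h]
      exact p.smul_mem _ (hp g v hv)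

theorem isIrreducible_toRepresentation_of_isAtom {ρ : Representation k G V}
    {p : Subrepresentation ρ} (hp : IsAtom p) : IsIrreducible p.toRepresentation := by
  have hp_ne_bot : p.toSubmodule ≠ ⊥ :=
    fun e ↦ hp.1 (Subrepresentation.toSubmodule_injective e)
  have := Submodule.nontrivial_iff_ne_bot.2 hp_ne_bot
  refine isIrreducible_of_forall_eq_bot_or_eq_top _ fun q hq ↦ ?_
  let q' : Subrepresentation ρ := ⟨q.map p.toSubmodule.subtype, by
    rintro g _ ⟨v, hv, rfl⟩
    exact ⟨_, hq g v hv, rfl⟩⟩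
  have hq' : q' ≤ p := Submodule.map_subtype_le _ _
  refine (hp.le_iff.1 hq').imp (fun e ↦ ?_) (fun e ↦ ?_)
  · exact Submodule.map_injective_of_injective p.toSubmodule.subtype_injective
      ((congrArg Subrepresentation.toSubmodule e).trans (Submodule.map_bot _).symm)
  · exact Submodule.map_injective_of_injective p.toSubmodule.subtype_injective
      ((congrArg Subrepresentation.toSubmodule e).trans (Submodule.map_subtype_top _).symm)

theorem exists_isIrreducible_subrepresentation [FiniteDimensional k V] [Nontrivial V]
    (ρ : Representation k G V) : ∃ p : Subrepresentation ρ, IsIrreducible p.toRepresentation := by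
  have : Nontrivial ρ.asModule := inferInstanceAs (Nontrivial V)
  have : FiniteDimensional k ρ.asModule := inferInstanceAs (FiniteDimensional k V)
  have : IsArtinian k[G] ρ.asModule := isArtinian_of_tower k inferInstance
  obtain ⟨m, hm⟩ := IsAtomic.exists_atom (Submodule k[G] ρ.asModule)
  exact ⟨_, isIrreducible_toRepresentation_of_isAtom
    ((Subrepresentation.subrepresentationSubmoduleOrderIso.symm.isAtom_iff m).2 hm)⟩

theorem exists_character_eq_sum_isIrreducible {G : Type*} [Group G] [Finite G] [CharZero k]
    [FiniteDimensional k V] (ρ : Representation k G V) : ∃ s : Finset (Subrepresentation ρ),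
      (∀ p ∈ s, IsIrreducible p.toRepresentation) ∧
        ρ.character = ∑ p ∈ s, p.toRepresentation.character := by
  have : FiniteDimensional k ρ.asModule := inferInstanceAs (FiniteDimensional k V)
  have : IsNoetherian k[G] ρ.asModule := isNoetherian_of_tower k inferInstance
  obtain ⟨s, hind, hsup, hsimple⟩ :=
    IsSemisimpleModule.exists_sSupIndep_sSup_simples_eq_top k[G] ρ.asModule
  have := (WellFoundedGT.finite_of_sSupIndep hind).fintype
  let e : s ↪ Subrepresentation ρ := (Function.Embedding.subtype _).trans
    Subrepresentation.subrepresentationSubmoduleOrderIso.symm.toEquiv.toEmbedding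
  have hinternal : DirectSum.IsInternal fun m ↦ (e m).toSubmodule :=
    ((DirectSum.isInternal_submodule_iff_iSupIndep_and_iSup_eq_top (fun m : s ↦ m.1)).2
      ⟨(sSupIndep_iff _).1 hind, by rwa [← sSup_eq_iSup']⟩ :)
  refine ⟨Finset.univ.map e, ?_, ?_⟩
  · simp only [Finset.mem_map, Finset.mem_univ, true_and, forall_exists_index,
      forall_apply_eq_imp_iff]
    exact fun m ↦ isIrreducible_toRepresentation_of_isAtom
      ((OrderIso.isAtom_iff _ m.1).2 (isSimpleModule_iff_isAtom.1 (hsimple m m.2)))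
  · ext g
    rw [Finset.sum_map, Finset.sum_apply]
    exact LinearMap.trace_eq_sum_trace_restrict hinternal
      fun m v hv ↦ (e m).apply_mem_toSubmodule g hv

theorem character_eq_of_forall_isIrreducible {G : Type*} [Group G] [Finite G] [CharZero k]
    [FiniteDimensional k V] (ρ : Representation k G V) {g h : G}
    (hgh : ∀ p : Subrepresentation ρ, IsIrreducible p.toRepresentation →
      p.toRepresentation.character g = p.toRepresentation.character h) :
    ρ.character g = ρ.character h := by
  obtain ⟨s, hs, hsum⟩ := exists_character_eq_sum_isIrreducible ρ
  rw [hsum, Finset.sum_apply, Finset.sum_apply]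
  exact Finset.sum_congr rfl fun p hp ↦ hgh p (hs p hp)

theorem isIrreducible_of_simple (V : FDRep k G) [Simple V] : IsIrreducible V.ρ := by
  have hnontrivial : Nontrivial V := by
    by_contra hV
    rw [not_nontrivial_iff_subsingleton] at hV
    exact id_nonzero V (ConcreteCategory.hom_ext _ _ fun v ↦ Subsingleton.elim (α := V) _ _)
  refine isIrreducible_of_forall_eq_bot_or_eq_top _ fun p hp ↦
    or_iff_not_imp_left.2 fun hp_ne_bot ↦ ?_
  let P : Subrepresentation V.ρ := ⟨p, fun g v hv ↦ hp g v hv⟩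
  let ι : FDRep.of P.toRepresentation ⟶ V :=
    FDRep.forget₂HomLinearEquiv _ _ (Rep.ofHom ⟨p.subtype, fun _ ↦ rfl⟩)
  have : Mono ι := ConcreteCategory.mono_of_injective ι p.subtype_injective
  have : IsIso ι := isIso_of_mono_of_nonzero fun h ↦ hp_ne_bot (p.eq_bot_iff.2 fun v hv ↦ by
    have hv0 : ι ⟨v, hv⟩ = (0 : FDRep.of P.toRepresentation ⟶ V) ⟨v, hv⟩ := by rw [h]
    exact hv0)
  rw [Submodule.eq_top_iff']
  intro v
  obtain ⟨w, rfl⟩ := (ConcreteCategory.bijective_of_isIso ι).2 v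
  exact (w : p).2

end Irreducible

section Intertwining

section Monoid

variable {k G H V W : Type*} [Field k] [Monoid G] [Monoid H] [AddCommGroup V] [Module k V]
  [AddCommGroup W] [Module k W] {ρ : Representation k G V} {σ : Representation k G W}

theorem nontrivial_intertwiningMap_of_injective [Nontrivial V] {f : IntertwiningMap ρ σ}
    (hf : Function.Injective f) : Nontrivial (IntertwiningMap ρ σ) := by
  obtain ⟨v, hv⟩ := exists_ne (0 : V)
  exact ⟨f, 0, fun h0 ↦ hv (hf (by simp [h0]))⟩

theorem nontrivial_intertwiningMap_comp (h : Nontrivial (IntertwiningMap ρ σ)) (f : H →* G) :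
    Nontrivial (IntertwiningMap (ρ.comp f : Representation k H V)
      (σ.comp f : Representation k H W)) := by
  obtain ⟨T, hT⟩ := exists_ne (0 : IntertwiningMap ρ σ)
  let T' : IntertwiningMap (ρ.comp f : Representation k H V) (σ.comp f : Representation k H W) :=
    ⟨T.toLinearMap, fun x ↦ T.isIntertwining' (f x)⟩
  have hT' : T' ≠ 0 := fun h0 ↦
    hT (IntertwiningMap.ext (congrArg IntertwiningMap.toLinearMap h0 :))
  exact nontrivial_of_ne T' 0 hT'

end Monoid

variable {k G V W W' : Type*} [Field k] [CharZero k] [Group G] [AddCommGroup V] [Module k V]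
  [FiniteDimensional k V] [AddCommGroup W] [Module k W] [FiniteDimensional k W]
  [AddCommGroup W'] [Module k W'] [FiniteDimensional k W']

theorem nontrivial_intertwiningMap_iff_sum_ne_zero [Fintype G] (ρ : Representation k G V)
    (σ : Representation k G W) :
    Nontrivial (IntertwiningMap ρ σ) ↔ ∑ g, σ.character g * ρ.character g⁻¹ ≠ 0 := by
  have hcard : (Nat.card G : k) ≠ 0 := Nat.cast_ne_zero.2 Nat.card_pos.ne'
  have := invertibleOfNonzero hcard
  rw [← Module.finrank_pos_iff (R := k), Nat.pos_iff_ne_zero, ← Nat.cast_ne_zero (R := k),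
    ← card_inv_mul_sum_char_mul_char_eq_finrank, mul_ne_zero_iff_left (inv_ne_zero hcard)]

variable [Finite G]

theorem nontrivial_intertwiningMap_symm {ρ : Representation k G V} {σ : Representation k G W}
    (h : Nontrivial (IntertwiningMap ρ σ)) : Nontrivial (IntertwiningMap σ ρ) := by
  have := Fintype.ofFinite G
  rw [nontrivial_intertwiningMap_iff_sum_ne_zero] at h ⊢
  rw [← Equiv.sum_comp (Equiv.inv G)]
  simpa only [Equiv.inv_apply, inv_inv, mul_comm] using h

theorem nontrivial_intertwiningMap_congr_right {ρ : Representation k G V}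
    {σ : Representation k G W} {σ' : Representation k G W'} (hσ : σ.character = σ'.character)
    (h : Nontrivial (IntertwiningMap ρ σ)) : Nontrivial (IntertwiningMap ρ σ') := by
  have := Fintype.ofFinite G
  rwa [nontrivial_intertwiningMap_iff_sum_ne_zero, ← hσ,
    ← nontrivial_intertwiningMap_iff_sum_ne_zero]

end Intertwining

section Linear

theorem exists_monoidHom_forall_eq_smul {k G V : Type*} [Field k] [Monoid G] [AddCommGroup V]
    [Module k V] (τ : Representation k G V) (h : Module.finrank k V = 1) :
    ∃ lam : G →* k, ∀ g v, τ g v = lam g • v := by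
  refine ⟨LinearMap.det.comp τ, fun g v ↦ ?_⟩
  obtain ⟨c, hc, -⟩ := LinearMap.existsUnique_eq_smul_id_of_finrank_eq_one h (τ g)
  simp [hc, h]

theorem monoidHom_apply_inv_eq_star {G : Type*} [Group G] [Finite G] (lam : G →* ℂ) (g : G) :
    lam g⁻¹ = starRingEnd ℂ (lam g) := by
  have hinv : lam g⁻¹ = (lam g)⁻¹ := eq_inv_of_mul_eq_one_left (by rw [← map_mul]; simp)
  have hpow : lam g ^ Nat.card G = 1 := by rw [← map_pow, pow_card_eq_one', map_one]
  rw [hinv, Complex.inv_eq_conj (Complex.norm_eq_one_of_pow_eq_one hpow Nat.card_pos.ne')]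

theorem character_inv {G V : Type*} [Group G] [Finite G] [AddCommGroup V] [Module ℂ V]
    [FiniteDimensional ℂ V] (ρ : Representation ℂ G V) (g : G) :
    ρ.character g⁻¹ = starRingEnd ℂ (ρ.character g) := by
  let Z := Subgroup.zpowers g
  obtain ⟨s, hs, hsum⟩ := exists_character_eq_sum_isIrreducible (ρ.comp Z.subtype)
  have hsum_apply (z : Z) : ρ.character z = ∑ p ∈ s, p.toRepresentation.character z := by
    rw [← Finset.sum_apply, ← hsum]; rfl
  let z : Z := ⟨g, Subgroup.mem_zpowers g⟩
  calc ρ.character g⁻¹ = ∑ p ∈ s, p.toRepresentation.character z⁻¹ := hsum_apply z⁻¹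
    _ = ∑ p ∈ s, starRingEnd ℂ (p.toRepresentation.character z) :=
      Finset.sum_congr rfl fun p hp ↦ by
        have := hs p hp
        have hdim := IsIrreducible.finrank_eq_one_of_isMulCommutative p.toRepresentation
        obtain ⟨lam, hlam⟩ := exists_monoidHom_forall_eq_smul p.toRepresentation hdim
        have hchar (y : Z) : p.toRepresentation.character y = lam y := by
          rw [character, LinearMap.ext (hlam y : ∀ v, _ = (lam y • LinearMap.id) v)]
          simp [hdim]
        rw [hchar, hchar, monoidHom_apply_inv_eq_star]
    _ = starRingEnd ℂ (ρ.character g) := by rw [← map_sum, ← hsum_apply z]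

variable {k G V W : Type*} [Field k] [IsAlgClosed k] [Group G] [AddCommGroup V] [Module k V]
  [FiniteDimensional k V] [AddCommGroup W] [Module k W] [FiniteDimensional k W]

theorem exists_monoidHom_eigenvector {G : Type*} [Monoid G] [IsMulCommutative G] [Nontrivial V]
    (τ : Representation k G V) : ∃ lam : G →* k, ∃ v ≠ 0, ∀ g, τ g v = lam g • v := by
  obtain ⟨p, hp⟩ := exists_isIrreducible_subrepresentation τ
  have := nontrivial_of_isIrreducible p.toRepresentation
  obtain ⟨v, hv⟩ := exists_ne (0 : p.toSubmodule)
  obtain ⟨lam, hlam⟩ := exists_monoidHom_forall_eq_smul p.toRepresentation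
    (IsIrreducible.finrank_eq_one_of_isMulCommutative p.toRepresentation)
  exact ⟨lam, v, by simpa using hv, fun g ↦ congrArg Subtype.val (hlam g v)⟩

theorem exists_monoidHom_comp_eq_smul_comp (N : Subgroup G) [N.Normal] [IsMulCommutative (G ⧸ N)]
    (ρ : Representation k G V) (σ : Representation k G W)
    (h : Nontrivial (IntertwiningMap (ρ.comp N.subtype) (σ.comp N.subtype))) :
    ∃ lam : G →* k, (∀ n ∈ N, lam n = 1) ∧
      ∃ T : V →ₗ[k] W, T ≠ 0 ∧ ∀ g, σ g ∘ₗ T = lam g • T ∘ₗ ρ g := by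
  have : Nontrivial (invariants ((linHom ρ σ).comp N.subtype)) :=
    (invariantsEquivIntertwiningMap (ρ.comp N.subtype) (σ.comp N.subtype)).toEquiv.nontrivial
  obtain ⟨lam, T, hT, hlam⟩ :=
    exists_monoidHom_eigenvector (quotientToInvariants (linHom ρ σ) N)
  have hconj (g : G) : σ g ∘ₗ T.1 ∘ₗ ρ g⁻¹ = lam g • T.1 := congrArg Subtype.val (hlam g)
  refine ⟨lam.comp (QuotientGroup.mk' N), fun n hn ↦ ?_, T.1, by simpa using hT, fun g ↦ ?_⟩
  · rw [MonoidHom.comp_apply, QuotientGroup.mk'_apply, (QuotientGroup.eq_one_iff n).2 hn, map_one]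
  · rw [MonoidHom.comp_apply, QuotientGroup.mk'_apply, ← LinearMap.smul_comp, ← hconj]
    ext v
    simp

theorem exists_monoidHom_character_eq_mul (N : Subgroup G) [N.Normal] [IsMulCommutative (G ⧸ N)]
    (ρ : Representation k G V) (σ : Representation k G W) [IsIrreducible ρ] [IsIrreducible σ]
    (h : Nontrivial (IntertwiningMap (ρ.comp N.subtype) (σ.comp N.subtype))) :
    ∃ lam : G →* k, (∀ n ∈ N, lam n = 1) ∧ ∀ g, σ.character g = lam g * ρ.character g := by
  obtain ⟨lam, hlam, T, hT, hcomm⟩ := exists_monoidHom_comp_eq_smul_comp N ρ σ h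
  let ρ' : Representation k G V :=
    { toFun g := lam g • ρ g
      map_one' := by simp
      map_mul' g h := by simp [mul_smul, smul_comm (lam h)] }
  have : IsIrreducible ρ' := isIrreducible_of_smul ρ ρ' (fun g ↦ (lam.toHomUnits g)⁻¹) fun g ↦ by
    rw [eq_inv_smul_iff]; rfl
  let T' : IntertwiningMap ρ' σ :=
    ⟨T, fun g ↦ (by rw [hcomm g, LinearMap.comp_smul] : T ∘ₗ (lam g • ρ g) = σ g ∘ₗ T)⟩
  have hT' : Function.Bijective T' := (IsIrreducible.bijective_or_eq_zero T').resolve_right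
    fun h0 ↦ hT (congrArg IntertwiningMap.toLinearMap h0)
  refine ⟨lam, hlam, fun g ↦ ?_⟩
  rw [← char_iso (T'.ofBijective hT')]
  exact map_smul (LinearMap.trace k V) (lam g) (ρ g)

end Linear

section Clifford

variable {k G V W W' : Type*} [Field k] [AddCommGroup V] [Module k V]
  [AddCommGroup W] [Module k W] [AddCommGroup W'] [Module k W']

theorem exists_comp_apply_comp_ne_zero [Monoid G] (ρ : Representation k G V) [IsIrreducible ρ]
    {f : W →ₗ[k] V} {f' : V →ₗ[k] W'} (hf : f ≠ 0) (hf' : f' ≠ 0) :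
    ∃ x, f' ∘ₗ ρ x ∘ₗ f ≠ 0 := by
  by_contra! h
  let K : Submodule k V := ⨅ x, LinearMap.ker (f' ∘ₗ ρ x)
  have hK_inv (g : G) (v : V) (hv : v ∈ K) : ρ g v ∈ K := by
    simp only [K, Submodule.mem_iInf, LinearMap.mem_ker, LinearMap.comp_apply] at hv ⊢
    intro x
    rw [← Module.End.mul_apply, ← map_mul, hv]
  have hrange : LinearMap.range f ≤ K :=
    le_iInf fun x ↦ LinearMap.range_le_ker_iff.2 (h x)
  rcases eq_bot_or_eq_top_of_isIrreducible ρ K hK_inv with hK | hK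
  · exact hf (LinearMap.range_eq_bot.1 (eq_bot_iff.2 (hK ▸ hrange)))
  · have hker : LinearMap.ker (f' ∘ₗ ρ 1) = ⊤ := eq_top_iff.2 (hK ▸ iInf_le _ 1)
    exact hf' (by simpa [Module.End.one_eq_id] using LinearMap.ker_eq_top.1 hker)

variable [Group G]

theorem exists_character_conjNormal_eq {N : Subgroup G} [N.Normal] (ρ : Representation k G V)
    [IsIrreducible ρ] (σ : Representation k N W) (σ' : Representation k N W') [IsIrreducible σ]
    [IsIrreducible σ'] (h : Nontrivial (IntertwiningMap σ (ρ.comp N.subtype)))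
    (h' : Nontrivial (IntertwiningMap (ρ.comp N.subtype) σ')) :
    ∃ x : G, ∀ n, σ.character n = σ'.character (MulAut.conjNormal x n) := by
  obtain ⟨f, hf⟩ := exists_ne (0 : IntertwiningMap σ (ρ.comp N.subtype))
  obtain ⟨f', hf'⟩ := exists_ne (0 : IntertwiningMap (ρ.comp N.subtype) σ')
  obtain ⟨x, hx⟩ := exists_comp_apply_comp_ne_zero ρ
    (fun h0 ↦ hf (IntertwiningMap.ext h0)) (fun h0 ↦ hf' (IntertwiningMap.ext h0))
  let σ'x : Representation k N W' := σ'.comp (MulAut.conjNormal x).toMonoidHom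
  have : IsIrreducible σ'x := isIrreducible_comp_of_surjective σ' (MulAut.conjNormal x).surjective
  let T : IntertwiningMap σ σ'x := ⟨f'.toLinearMap ∘ₗ ρ x ∘ₗ f.toLinearMap, fun n ↦ by
    ext w
    have hf_n : f (σ n w) = ρ n (f w) := IntertwiningMap.isIntertwining _ _ f n w
    have hf'_n (y : N) (v : V) : f' (ρ y v) = σ' y (f' v) :=
      IntertwiningMap.isIntertwining _ _ f' y v
    change f' (ρ x (f (σ n w))) = σ' (MulAut.conjNormal x n) (f' (ρ x (f w)))
    rw [hf_n, ← hf'_n, MulAut.conjNormal_apply, ← Module.End.mul_apply, ← Module.End.mul_apply,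
      ← map_mul, ← map_mul, inv_mul_cancel_right]⟩
  have hT : Function.Bijective T := (IsIrreducible.bijective_or_eq_zero T).resolve_right
    fun h0 ↦ hx (congrArg IntertwiningMap.toLinearMap h0)
  exact ⟨x, congrFun (char_iso (T.ofBijective hT))⟩

end Clifford

section TrivialModulo

variable {G : Type*} [Group G] {N : Subgroup G} {α : MulAut G}

theorem map_eq_self_of_forall_mul_inv_mem (hα : ∀ g, α g * g⁻¹ ∈ N) {H : Subgroup G}
    (hNH : N ≤ H) : H.map α.toMonoidHom = H := by
  have hmem (g : G) : g ∈ H ↔ α g ∈ H := by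
    rw [← H.mul_mem_cancel_left (hNH (hα g)), inv_mul_cancel_right]
  ext g
  rw [Subgroup.mem_map_equiv, hmem, MulEquiv.apply_symm_apply]

/-- The automorphism induced by `α` on a subgroup `H` containing a subgroup `N` modulo which `α` is
trivial, that is, `α g ∈ N * g` for all `g`. -/
def restrictAut (hα : ∀ g, α g * g⁻¹ ∈ N) {H : Subgroup G} (hNH : N ≤ H) : MulAut H :=
  (α.subgroupMap H).trans (MulEquiv.subgroupCongr (map_eq_self_of_forall_mul_inv_mem hα hNH))

section restrictAut

variable (hα : ∀ g, α g * g⁻¹ ∈ N) {H : Subgroup G} (hNH : N ≤ H)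

@[simp]
theorem coe_restrictAut_apply (h : H) : (restrictAut hα hNH h : G) = α h :=
  rfl

theorem coe_restrictAut_pow_apply (i : ℕ) (h : H) :
    ((restrictAut hα hNH ^ i) h : G) = (α ^ i) h := by
  induction i with
  | zero => rfl
  | succ i ih => rw [pow_succ', pow_succ', MulAut.mul_apply, coe_restrictAut_apply, ih]; rfl

theorem restrictAut_pow_orderOf : restrictAut hα hNH ^ orderOf α = 1 :=
  MulEquiv.ext fun h ↦ Subtype.ext <| by
    rw [coe_restrictAut_pow_apply, pow_orderOf_eq_one]
    rfl

theorem character_conjNormal_restrictAut {k W : Type*} [Field k] [AddCommGroup W] [Module k W]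
    [N.Normal] (σ : Representation k N W) (x : G) (n : N) :
    σ.character (MulAut.conjNormal x (restrictAut hα le_rfl n)) =
      σ.character (restrictAut hα le_rfl (MulAut.conjNormal x n)) := by
  let u : N := ⟨α x * x⁻¹, hα x⟩
  rw [← char_conj σ _ u]
  congr 1
  ext
  simp [u, mul_assoc]

end restrictAut

end TrivialModulo

section Invariance

/-- The stabilizer in `G` of a function on a normal subgroup `N` under conjugation; for an
irreducible character of `N` this is its inertia subgroup. -/
def inertiaSubgroup {G X : Type*} [Group G] {N : Subgroup G} [N.Normal] (θ : N → X) :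
    Subgroup G where
  carrier := {x | ∀ n, θ (MulAut.conjNormal x n) = θ n}
  one_mem' n := by simp
  mul_mem' hx hy n := by rw [map_mul, MulAut.mul_apply, hx, hy]
  inv_mem' {x} hx n := by rw [← hx, ← MulAut.mul_apply, ← map_mul]; simp

theorem mem_of_pow_mem_of_pow_mem_of_coprime {G : Type*} [Group G] {H : Subgroup G} {x : G}
    {a b : ℕ} (ha : x ^ a ∈ H) (hb : x ^ b ∈ H) (hab : a.Coprime b) : x ∈ H := by
  have hx : x = (x ^ a) ^ a.gcdA b * (x ^ b) ^ a.gcdB b := by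
    rw [← zpow_natCast, ← zpow_natCast, ← zpow_mul, ← zpow_mul, ← zpow_add, ← Nat.gcd_eq_gcd_ab,
      hab.gcd_eq_one, Nat.cast_one, zpow_one]
  rw [hx]
  exact mul_mem (zpow_mem ha _) (zpow_mem hb _)

theorem isMulCommutative_quotient_subgroupOf_comap_mk' {G : Type*} [Group G] {N : Subgroup G}
    [N.Normal] (C : Subgroup (G ⧸ N)) [IsMulCommutative C] :
    IsMulCommutative (C.comap (QuotientGroup.mk' N) ⧸
      N.subgroupOf (C.comap (QuotientGroup.mk' N))) := by
  refine .of_comm ?_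
  rintro ⟨a⟩ ⟨b⟩
  have hcomm : (⟨_, a.2⟩ * ⟨_, b.2⟩ : C) = ⟨_, b.2⟩ * ⟨_, a.2⟩ := mul_comm' _ _
  exact QuotientGroup.eq.2 <| Subgroup.mem_subgroupOf.2 <| QuotientGroup.eq.1 <|
    congrArg Subtype.val hcomm

variable {k G V W : Type*} [Field k] [CharZero k] [Group G] [Finite G] {N : Subgroup G} [N.Normal]
  {α : MulAut G} [AddCommGroup V] [Module k V] [FiniteDimensional k V]
  [AddCommGroup W] [Module k W] [FiniteDimensional k W]

theorem character_restrictAut_eq_of_character_aut_eq (hα : ∀ g, α g * g⁻¹ ∈ N)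
    (hcop : N.index.Coprime (orderOf α)) (ρ : Representation k G V) [IsIrreducible ρ]
    (σ : Representation k N W) [IsIrreducible σ]
    (hσ : Nontrivial (IntertwiningMap σ (ρ.comp N.subtype)))
    (hρ : ∀ g, ρ.character (α g) = ρ.character g) (n : N) :
    σ.character (restrictAut hα le_rfl n) = σ.character n := by
  set β : MulAut N := restrictAut hα le_rfl
  let σβ : Representation k N W := σ.comp β.toMonoidHom
  have : IsIrreducible σβ := isIrreducible_comp_of_surjective σ β.surjective
  have hσβ : Nontrivial (IntertwiningMap σβ (ρ.comp N.subtype)) :=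
    nontrivial_intertwiningMap_congr_right (funext fun n ↦ hρ n)
      (nontrivial_intertwiningMap_comp hσ β.toMonoidHom)
  obtain ⟨x, hx⟩ := exists_character_conjNormal_eq ρ σβ σ hσβ (nontrivial_intertwiningMap_symm hσ)
  have hpow (i : ℕ) (n : N) :
      σ.character ((β ^ i) n) = σ.character (MulAut.conjNormal (x ^ i) n) := by
    induction i generalizing n with
    | zero => simp
    | succ i ih =>
      calc σ.character ((β ^ (i + 1)) n) = σ.character (MulAut.conjNormal (x ^ i) (β n)) := ih _
        _ = σ.character (β (MulAut.conjNormal (x ^ i) n)) :=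
          character_conjNormal_restrictAut hα σ _ n
        _ = σ.character (MulAut.conjNormal x (MulAut.conjNormal (x ^ i) n)) := hx _
        _ = σ.character (MulAut.conjNormal (x ^ (i + 1)) n) := by
          rw [pow_succ', map_mul, MulAut.mul_apply]
  have hx_index : x ^ N.index ∈ inertiaSubgroup σ.character := fun n ↦ by
    let y : N := ⟨x ^ N.index, N.pow_index_mem x⟩
    rw [← char_conj σ n y]
    rfl
  have hx_order : x ^ orderOf α ∈ inertiaSubgroup σ.character := fun n ↦ by
    rw [← hpow, restrictAut_pow_orderOf, MulAut.one_apply]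
  have hx_mem := mem_of_pow_mem_of_pow_mem_of_coprime hx_index hx_order hcop
  exact (hx n).trans (hx_mem n)

theorem character_aut_eq_of_isMulCommutative_quotient [IsAlgClosed k] [IsMulCommutative (G ⧸ N)]
    (hα : ∀ g, α g * g⁻¹ ∈ N) (hcop : N.index.Coprime (orderOf α)) (ρ : Representation k G V)
    [IsIrreducible ρ] (hρ : ∀ n ∈ N, ρ.character (α n) = ρ.character n) (g : G) :
    ρ.character (α g) = ρ.character g := by
  let ρα : Representation k G V := ρ.comp α.toMonoidHom
  have : IsIrreducible ρα := isIrreducible_comp_of_surjective ρ α.surjective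
  have := nontrivial_of_isIrreducible ρ
  have hρα : Nontrivial (IntertwiningMap (ρ.comp N.subtype) (ρα.comp N.subtype)) :=
    nontrivial_intertwiningMap_congr_right (funext fun n ↦ (hρ n n.2).symm)
      (nontrivial_intertwiningMap_of_injective (f := IntertwiningMap.id _) Function.injective_id)
  obtain ⟨lam, hlam_N, hlam⟩ : ∃ lam : G →* k, (∀ n ∈ N, lam n = 1) ∧
      ∀ x, ρ.character (α x) = lam x * ρ.character x :=
    exists_monoidHom_character_eq_mul N ρ ρα hρα
  have hlam_aut (x : G) : lam (α x) = lam x := by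
    rw [← inv_mul_cancel_right (α x) x, map_mul, hlam_N _ (hα x), one_mul]
  have hpow (i : ℕ) : ρ.character ((α ^ i) g) = lam g ^ i * ρ.character g ∧
      lam ((α ^ i) g) = lam g := by
    induction i with
    | zero => simp
    | succ i ih =>
      rw [pow_succ', MulAut.mul_apply, hlam_aut, ih.2, pow_succ', mul_assoc, ← ih.1, ← ih.2]
      exact ⟨hlam _, rfl⟩
  rcases eq_or_ne (ρ.character g) 0 with hg | hg
  · rw [hlam, hg, mul_zero]
  have hlam_order : lam g ^ orderOf α = 1 := by
    have h := (hpow (orderOf α)).1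
    rw [pow_orderOf_eq_one, MulAut.one_apply] at h
    exact (mul_eq_right₀ hg).1 h.symm
  have hlam_index : lam g ^ N.index = 1 := by rw [← map_pow, hlam_N _ (N.pow_index_mem g)]
  have hlam_one : lam g = 1 :=
    (pow_eq_one_iff_of_coprime hcop).1 ⟨hlam_index, hlam_order⟩
  rw [hlam, hlam_one, one_mul]

theorem character_restrictAut_eq_of_injective (hα : ∀ g, α g * g⁻¹ ∈ N)
    (ρ : Representation k G V) [IsIrreducible ρ] (σ : Representation k N W) [IsIrreducible σ]
    (hσ : Nontrivial (IntertwiningMap σ (ρ.comp N.subtype)))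
    (hσα : ∀ n, σ.character (restrictAut hα le_rfl n) = σ.character n)
    {U : Type*} [AddCommGroup U] [Module k U] [FiniteDimensional k U] (τ : Representation k N U)
    (f : IntertwiningMap τ (ρ.comp N.subtype)) (hf : Function.Injective f) (n : N) :
    τ.character (restrictAut hα le_rfl n) = τ.character n := by
  refine character_eq_of_forall_isIrreducible τ fun p hp ↦ ?_
  have := nontrivial_of_isIrreducible p.toRepresentation
  let fp : IntertwiningMap p.toRepresentation (ρ.comp N.subtype) :=
    ⟨f.toLinearMap ∘ₗ p.toSubmodule.subtype, fun y ↦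
      congrArg (· ∘ₗ p.toSubmodule.subtype) (f.isIntertwining' y)⟩
  have hfp : Function.Injective fp := hf.comp p.toSubmodule.subtype_injective
  obtain ⟨x, hx⟩ := exists_character_conjNormal_eq ρ p.toRepresentation σ
    (nontrivial_intertwiningMap_of_injective hfp) (nontrivial_intertwiningMap_symm hσ)
  rw [hx, hx, character_conjNormal_restrictAut, hσα]

theorem character_aut_eq_of_character_restrictAut_eq [IsAlgClosed k] (hα : ∀ g, α g * g⁻¹ ∈ N)
    (hcop : N.index.Coprime (orderOf α)) (ρ : Representation k G V) [IsIrreducible ρ]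
    (σ : Representation k N W) [IsIrreducible σ]
    (hσ : Nontrivial (IntertwiningMap σ (ρ.comp N.subtype)))
    (hσα : ∀ n, σ.character (restrictAut hα le_rfl n) = σ.character n) (g : G) :
    ρ.character (α g) = ρ.character g := by
  let H : Subgroup G := (Subgroup.zpowers (g : G ⧸ N)).comap (QuotientGroup.mk' N)
  have hNH : N ≤ H := fun n hn ↦ by
    simp [H, (QuotientGroup.eq_one_iff n).2 hn, one_mem]
  let M : Subgroup H := N.subgroupOf H
  have : IsMulCommutative (H ⧸ M) := isMulCommutative_quotient_subgroupOf_comap_mk' _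
  let γ : MulAut H := restrictAut hα hNH
  have hcopM : M.index.Coprime (orderOf γ) :=
    (hcop.coprime_dvd_left (N.relIndex_dvd_index_of_normal H)).coprime_dvd_right
      (orderOf_dvd_of_pow_eq_one (restrictAut_pow_orderOf hα hNH))
  let h : H := ⟨g, Subgroup.mem_zpowers (g : G ⧸ N)⟩
  refine character_eq_of_forall_isIrreducible (g := γ h) (h := h) (ρ.comp H.subtype) fun p hp ↦ ?_
  refine character_aut_eq_of_isMulCommutative_quotient (N := M) (fun x ↦ hα x) hcopM
    p.toRepresentation (fun n hn ↦ ?_) h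
  exact character_restrictAut_eq_of_injective hα ρ σ hσ hσα
    (p.toRepresentation.comp (Subgroup.inclusion hNH)) ⟨p.toSubmodule.subtype, fun _ ↦ rfl⟩
    p.toSubmodule.subtype_injective ⟨n, hn⟩

theorem forall_character_aut_eq_iff [IsAlgClosed k] (hα : ∀ g, α g * g⁻¹ ∈ N)
    (hcop : N.index.Coprime (orderOf α)) (ρ : Representation k G V) [IsIrreducible ρ]
    (σ : Representation k N W) [IsIrreducible σ]
    (hσ : Nontrivial (IntertwiningMap σ (ρ.comp N.subtype))) :
    (∀ g, ρ.character (α g) = ρ.character g) ↔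
      ∀ n, σ.character (restrictAut hα le_rfl n) = σ.character n :=
  ⟨character_restrictAut_eq_of_character_aut_eq hα hcop ρ σ hσ,
    character_aut_eq_of_character_restrictAut_eq hα hcop ρ σ hσ⟩

end Invariance

theorem charInner_character_ne_zero_iff {G : Type} {V W : Type*} [Group G] [Fintype G]
    [AddCommGroup V] [Module ℂ V] [FiniteDimensional ℂ V] [AddCommGroup W] [Module ℂ W]
    [FiniteDimensional ℂ W] (ρ : Representation ℂ G V) (σ : Representation ℂ G W) :
    charInner G σ.character ρ.character ≠ 0 ↔ Nontrivial (IntertwiningMap ρ σ) := by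
  have hcard : (Nat.card G : ℂ) ≠ 0 := Nat.cast_ne_zero.2 Nat.card_pos.ne'
  rw [nontrivial_intertwiningMap_iff_sum_ne_zero, charInner,
    mul_ne_zero_iff_left (inv_ne_zero hcard)]
  simp only [character_inv]

theorem stmt_5_general {G : Type} [Group G] [Fintype G] (α : MulAut G) (N : Subgroup G) [N.Normal]
    (hcop : N.index.Coprime (orderOf α)) (htriv : ∀ g, α g * g⁻¹ ∈ N)
    (χ : G → ℂ) (hχ : IsIrrChar χ) (θ : N → ℂ) (hθ : IsIrrChar θ)
    (hover : charInner N (charRes N χ) θ ≠ 0) :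
    (∀ g, χ (α g) = χ g) ↔ ∀ n m : N, (m : G) = α n → θ m = θ n := by
  obtain ⟨V, hV, rfl⟩ := hχ
  obtain ⟨W, hW, rfl⟩ := hθ
  have := isIrreducible_of_simple V
  have := isIrreducible_of_simple W
  have hWV : Nontrivial (IntertwiningMap W.ρ (V.ρ.comp N.subtype)) :=
    (charInner_character_ne_zero_iff W.ρ (V.ρ.comp N.subtype)).1 hover
  refine (forall_character_aut_eq_iff htriv hcop V.ρ W.ρ hWV).trans (forall_congr' fun n ↦ ?_)
  constructor
  · intro hn m hm
    obtain rfl : m = restrictAut htriv le_rfl n := Subtype.ext hm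
    exact hn
  · exact fun hn ↦ hn _ rfl

/-- Wolf's Lemma 1.4: `A` acts on `G`, `N ⊴ G` is `A`-invariant, `gcd(|G:N|,|A|) = 1`,
`A` acts trivially on `G/N`; for `χ ∈ Irr G`, `θ ∈ Irr N` with `[χ|_N, θ] ≠ 0`,
`χ` is `A`-invariant iff `θ` is `A`-invariant. -/
theorem stmt_5 {G A : Type} [Group G] [Fintype G] [Group A] [Fintype A]
    (φ : A →* MulAut G) (N : Subgroup G) [N.Normal]
    (hNinv : ∀ a : A, ∀ n ∈ N, φ a n ∈ N)
    (hcop : Nat.Coprime N.index (Nat.card A))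
    (htriv : ∀ a : A, ∀ g : G, (φ a g) * g⁻¹ ∈ N)
    (χ : G → ℂ) (hχ : IsIrrChar χ) (θ : N → ℂ) (hθ : IsIrrChar θ)
    (hover : charInner N (charRes N χ) θ ≠ 0) :
    (∀ a : A, ∀ g : G, χ (φ a g) = χ g) ↔
      (∀ a : A, ∀ n m : N, (m : G) = φ a (n : G) → θ m = θ n) :=
  forall_congr' fun a ↦ stmt_5_general (φ a) N
    (hcop.coprime_dvd_right ((orderOf_map_dvd φ a).trans (orderOf_dvd_natCard a)))
    (htriv a) χ hχ θ hθ hover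
end
end
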